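/- Set ExRet(ε) := ∅. For each level-2 stack s, ExRet(s) is determined by ExRet(Pop₁(s)), Sym(s) and Lvl(s): if w,w' are topmost words of level-2 stacks with Sym(w)=Sym(w'), Lvl(w)=Lvl(w') and ExRet(Pop₁(w))=ExRet(Pop₁(w')), then ExRet(w)=ExRet(w'). -/

import Mathlib

namespace CPG

/-! ## Level-2 collapsible pushdown stacks -/

/-- Stack letters: `Sum.inl σ` is a letter with a level-1 link,
`Sum.inr (σ, k)` is a letter with a level-2 link to the substack of width `k`. -/
abbrev Letter (A : Type) := A ⊕ (A × ℕ)

def symOf {A : Type} : Letter A → A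
  | Sum.inl a => a
  | Sum.inr (a, _) => a

def lvlOf {A : Type} : Letter A → ℕ
  | Sum.inl _ => 1
  | Sum.inr _ => 2

abbrev Word (A : Type) := List (Letter A)

/-- A 2-word: a list of words; the last word is the topmost one. -/
abbrev Stack2 (A : Type) := List (Word A)

/-- The initial level-2 stack `⊥₂`. -/
def bottom2 {A : Type} (bot : A) : Stack2 A := [[Sum.inl bot]]

def top2 {A : Type} (s : Stack2 A) : Option (Word A) := s.getLast?

def top1 {A : Type} (s : Stack2 A) : Option (Letter A) := s.getLast?.bind List.getLast?

def symS {A : Type} (s : Stack2 A) : Option A := (top1 s).map symOf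

def lvlS {A : Type} (s : Stack2 A) : Option ℕ := (top1 s).map lvlOf

def lnkS {A : Type} (s : Stack2 A) : Option ℕ :=
  match top1 s, top2 s with
  | some (Sum.inr (_, j)), _ => some j
  | some (Sum.inl _), some w => some (w.length - 1)
  | _, _ => none

def clone2 {A : Type} (s : Stack2 A) : Option (Stack2 A) :=
  (top2 s).map fun w => s ++ [w]

def push1 {A : Type} [DecidableEq A] (bot a : A) (s : Stack2 A) : Option (Stack2 A) :=
  if a = bot then none else (top2 s).map fun w => s.dropLast ++ [w ++ [Sum.inl a]]

def push2 {A : Type} [DecidableEq A] (bot a : A) (s : Stack2 A) : Option (Stack2 A) :=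
  if a = bot then none else
    (top2 s).map fun w => s.dropLast ++ [w ++ [Sum.inr (a, s.length - 1)]]

def pop2 {A : Type} (s : Stack2 A) : Option (Stack2 A) :=
  if 1 < s.length then some s.dropLast else none

def pop1 {A : Type} (s : Stack2 A) : Option (Stack2 A) :=
  match s.getLast? with
  | some w => if 1 < w.length then some (s.dropLast ++ [w.dropLast]) else none
  | none => none

def collapse {A : Type} (s : Stack2 A) : Option (Stack2 A) :=
  match top1 s with
  | some (Sum.inr (_, k)) => if 0 < k then some (s.take k) else none
  | some (Sum.inl _) => pop1 s
  | none => none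

/-- The level-2 stack operations. -/
inductive Op (A : Type) where
  | clone2 | pop1 | pop2 | collapse
  | push1 (a : A) | push2 (a : A)

def applyOp {A : Type} [DecidableEq A] (bot : A) : Op A → Stack2 A → Option (Stack2 A)
  | .clone2 => clone2
  | .pop1 => pop1
  | .pop2 => pop2
  | .collapse => collapse
  | .push1 a => push1 bot a
  | .push2 a => push2 bot a

/-- `Stacks(Σ)` : the smallest set containing `⊥₂` and closed under the operations. -/
inductive IsStack {A : Type} [DecidableEq A] (bot : A) : Stack2 A → Prop where
  | base : IsStack bot (bottom2 bot)
  | step {s t : Stack2 A} (op : Op A) : IsStack bot s → applyOp bot op s = some t →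
      IsStack bot t

/-- Iterated application of a partial stack operation. -/
def iter {A : Type} (f : Stack2 A → Option (Stack2 A)) : ℕ → Stack2 A → Option (Stack2 A)
  | 0, s => some s
  | n + 1, s => (f s).bind (iter f n)

/-- `t` is a substack of `s`: `t = Pop₁ⁿ(Pop₂ᵐ(s))`. -/
def Substack {A : Type} (t s : Stack2 A) : Prop :=
  ∃ n m, (iter pop2 m s).bind (iter pop1 n) = some t

def ProperSubstack {A : Type} (t s : Stack2 A) : Prop := Substack t s ∧ t ≠ s

/-- `s` is a prefix of `t` (`s ⊑ t`). -/
def StackPrefix {A : Type} (s t : Stack2 A) : Prop :=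
  s ≠ [] ∧ s.length ≤ t.length ∧ s.dropLast <+: t ∧
    ∀ j, s.length - 1 ≤ j → j < t.length → s.getLastD [] <+: t.getD j []

/-- `t[s/u]` : the stack obtained from `t` by replacing the prefix `s` by `u`. -/
def substPrefix {A : Type} (t s u : Stack2 A) : Stack2 A :=
  u.dropLast ++
    (t.drop (s.length - 1)).map fun v => u.getLastD [] ++ v.drop (s.getLastD []).length

/-! ## Collapsible pushdown systems and runs -/

/-- A level-2 collapsible pushdown system. -/
structure CPS (Q A Γ : Type) where
  bot : A
  q0 : Q
  Δ : Set (Q × A × Γ × Q × Op A)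

variable {Q A Γ : Type} [DecidableEq A]

/-- A `γ`-labelled transition realized by the operation `op`. -/
def TransOp (S : CPS Q A Γ) (γ : Γ) (op : Op A) (c c' : Q × Stack2 A) : Prop :=
  ∃ σ : A, symS c.2 = some σ ∧ (c.1, σ, γ, c'.1, op) ∈ S.Δ ∧
    applyOp S.bot op c.2 = some c'.2

def Trans (S : CPS Q A Γ) (γ : Γ) (c c' : Q × Stack2 A) : Prop :=
  ∃ op, TransOp S γ op c c'

/-- A run of a collapsible pushdown system (recording configurations, labels and
operations of each step). -/
structure Run (S : CPS Q A Γ) where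
  len : ℕ
  cfg : ℕ → Q × Stack2 A
  lab : ℕ → Γ
  op : ℕ → Op A
  ok : ∀ i, i < len → TransOp S (lab i) (op i) (cfg i) (cfg (i + 1))

def Run.stk {S : CPS Q A Γ} (ρ : Run S) (i : ℕ) : Stack2 A := (ρ.cfg i).2

/-- The word of labels along a run. -/
def Run.labels {S : CPS Q A Γ} (ρ : Run S) : List Γ :=
  List.ofFn fun i : Fin ρ.len => ρ.lab i

/-- `Reach_L`-reachability: a run from `c` to `c'` labelled by a word in `L`. -/
def ReachL (S : CPS Q A Γ) (L : Language Γ) (c c' : Q × Stack2 A) : Prop :=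
  ∃ ρ : Run S, ρ.cfg 0 = c ∧ ρ.cfg ρ.len = c' ∧ ρ.labels ∈ L

/-- Plain reachability. -/
def Reach (S : CPS Q A Γ) (c c' : Q × Stack2 A) : Prop :=
  ∃ ρ : Run S, ρ.cfg 0 = c ∧ ρ.cfg ρ.len = c'

/-! ## ε-contraction -/

def oneLetterLang (γ : Γ) : Language Γ := {[γ]}

def nonEpsLang (eps : Γ) : Language Γ := {w | ∃ γ : Γ, γ ≠ eps ∧ w = [γ]}

/-- The language `{ε}*`. -/
def epsStar (eps : Γ) : Language Γ := KStar.kstar (oneLetterLang eps)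

/-- The language `({ε}*(Γ∖{ε}))*`. -/
def domLang (eps : Γ) : Language Γ :=
  KStar.kstar (epsStar eps * nonEpsLang eps)

/-- The language `{ε}*γ`. -/
def edgeLang (eps γ : Γ) : Language Γ := epsStar eps * oneLetterLang γ

/-- The vertex set of the ε-contraction `G/ε`. -/
def EpsDomain (S : CPS Q A Γ) (eps : Γ) : Set (Q × Stack2 A) :=
  {c | ReachL S (domLang eps) (S.q0, bottom2 S.bot) c}

/-! ## (Generalised) milestones and the order ≪ -/

/-- `wordAt bot s i` is the word `wᵢ` of `s`, with the convention `w₀ = ⊥`. -/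
def wordAt {A : Type} (bot : A) (s : Stack2 A) (i : ℕ) : Word A :=
  if i = 0 then [Sum.inl bot] else s.getD (i - 1) []

/-- Longest common prefix of two words. -/
def lcp {α : Type} [DecidableEq α] : List α → List α → List α
  | a :: s, b :: t => if a = b then a :: lcp s t else []
  | _, _ => []

/-- `m` is a generalised milestone of `s`. -/
def GenMilestone (bot : A) (s m : Stack2 A) : Prop :=
  ∃ i v, i < s.length ∧ m = s.take i ++ [v] ∧
    lcp (wordAt bot s i) (wordAt bot s (i + 1)) <+: v ∧
    (v <+: wordAt bot s i ∨ v <+: wordAt bot s (i + 1))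

/-- `m` is a milestone of `s`. -/
def Milestone (bot : A) (s m : Stack2 A) : Prop :=
  ∃ i v, i < s.length ∧ m = s.take i ++ [v] ∧
    lcp (wordAt bot s i) (wordAt bot s (i + 1)) <+: v ∧
    v <+: wordAt bot s (i + 1)

def genMilestones (bot : A) (s : Stack2 A) : Set (Stack2 A) := {m | GenMilestone bot s m}

def milestones (bot : A) (s : Stack2 A) : Set (Stack2 A) := {m | Milestone bot s m}

/-- The base cases of the partial order `≪`. -/
def llBase (bot : A) (s t : Stack2 A) : Prop :=
  s.length < t.length ∨
    (s ≠ [] ∧ s.length = t.length ∧ s.dropLast = t.dropLast ∧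
      ((t.getLastD [] <+: s.getLastD [] ∧ t.getLastD [] ≠ s.getLastD [] ∧
          s.getLastD [] <+: wordAt bot s (s.length - 1)) ∨
        (s.getLastD [] <+: t.getLastD [] ∧ s.getLastD [] ≠ t.getLastD [] ∧
          ¬ t.getLastD [] <+: wordAt bot s (s.length - 1))))

/-- The order `≪`: the smallest reflexive transitive relation containing `llBase`. -/
def ll (bot : A) : Stack2 A → Stack2 A → Prop := Relation.ReflTransGen (llBase bot)

/-- `m'` is the ≪-successor of `m` within `genMilestones bot s`. -/
def LlSuccessor (bot : A) (s m m' : Stack2 A) : Prop :=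
  GenMilestone bot s m ∧ GenMilestone bot s m' ∧ m ≠ m' ∧ ll bot m m' ∧
    ∀ m'', GenMilestone bot s m'' → ll bot m m'' → m'' ≠ m → ll bot m' m''

/-! ## Loops, returns and 1-loops -/

/-- The segment `[i,j]` of `ρ` is a loop (of its initial stack). -/
def LoopSeg {S : CPS Q A Γ} (ρ : Run S) (i j : ℕ) : Prop :=
  i ≤ j ∧ j ≤ ρ.len ∧ ρ.stk j = ρ.stk i ∧
    (∀ k, i ≤ k → k ≤ j → ∀ t, pop2 (ρ.stk i) = some t → ¬ Substack (ρ.stk k) t) ∧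
    (∀ k, i ≤ k → k ≤ j → ∀ m, 0 < m → ∀ t, iter pop1 m (ρ.stk i) = some t →
      ρ.stk k = t → ∀ m', m' < m → ∃ t', iter pop1 m' (ρ.stk i) = some t' ∧
        lvlS t' = some 1)

/-- A high loop: a loop that never visits `Pop₁` of its stack. -/
def HighLoopSeg {S : CPS Q A Γ} (ρ : Run S) (i j : ℕ) : Prop :=
  LoopSeg ρ i j ∧ ∀ k, i ≤ k → k ≤ j → ∀ t, pop1 (ρ.stk i) = some t → ρ.stk k ≠ t

/-- A low loop: a loop whose second and second-to-last stacks are `Pop₁` of its stack. -/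
def LowLoopSeg {S : CPS Q A Γ} (ρ : Run S) (i j : ℕ) : Prop :=
  LoopSeg ρ i j ∧ i < j ∧
    ∃ t, pop1 (ρ.stk i) = some t ∧ ρ.stk (i + 1) = t ∧ ρ.stk (j - 1) = t

/-- The common part of the definition of a return on the segment `[i,j]`:
it leads from its initial stack `t` to `Pop₂(t)` and never visits a substack
of `Pop₂(t)` before its final configuration. -/
def RetShell {S : CPS Q A Γ} (ρ : Run S) (i j : ℕ) : Prop :=
  i < j ∧ j ≤ ρ.len ∧ pop2 (ρ.stk i) = some (ρ.stk j) ∧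
    ∀ k, i ≤ k → k < j → ¬ Substack (ρ.stk k) (ρ.stk j)

/-- The segment `[i,j]` of `ρ` is a return (from its initial stack `t` to `Pop₂(t)`). -/
inductive RetSeg {S : CPS Q A Γ} (ρ : Run S) : ℕ → ℕ → Prop where
  | pop2 {i j : ℕ} (h : RetShell ρ i j) (hop : ρ.op (j - 1) = Op.pop2) : RetSeg ρ i j
  | collapse {i j : ℕ} (h : RetShell ρ i j) (hop : ρ.op (j - 1) = Op.collapse)
      (hpre : ∃ w w', top2 (ρ.stk i) = some w ∧ top2 (ρ.stk (j - 1)) = some w' ∧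
        w <+: w' ∧ w ≠ w') : RetSeg ρ i j
  | sub {i k j : ℕ} (h : RetShell ρ i j) (hik : i < k) (hkj : k ≤ j)
      (hpop : pop1 (ρ.stk i) = some (ρ.stk k)) (hret : RetSeg ρ k j) : RetSeg ρ i j

/-- The segment `[i,j]` of `ρ` is a level-1-loop. -/
def OneLoopSeg {S : CPS Q A Γ} (ρ : Run S) (i j : ℕ) : Prop :=
  i ≤ j ∧ j ≤ ρ.len ∧
    ∃ (s : Stack2 A) (w : Word A) (s' : Stack2 A),
      ρ.stk i = s ++ [w] ∧ ρ.stk j = s ++ s' ++ [w] ∧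
      (∀ k, i ≤ k → k ≤ j → s.length < (ρ.stk k).length) ∧
      (∀ k, i ≤ k → k ≤ j → 1 < w.length → top2 (ρ.stk k) = some w.dropLast →
        ∃ m, k < m ∧ m ≤ j ∧ RetSeg ρ k m)

/-! ## ExRet, ExLoop, ... -/

/-- `w↓₀` : replace every level-2 link by `0`. -/
def down0 {A : Type} : Word A → Word A :=
  List.map fun a => match a with
    | Sum.inl x => Sum.inl x
    | Sum.inr (x, _) => Sum.inr (x, 0)

def ExRet (S : CPS Q A Γ) (w : Word A) : Set (Q × Q) :=
  {p | ∃ ρ : Run S, ρ.cfg 0 = (p.1, [down0 w, down0 w]) ∧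
    ρ.cfg ρ.len = (p.2, [down0 w]) ∧ RetSeg ρ 0 ρ.len}

def ExLoop (S : CPS Q A Γ) (w : Word A) : Set (Q × Q) :=
  {p | ∃ ρ : Run S, ρ.cfg 0 = (p.1, [down0 w]) ∧ ρ.cfg ρ.len = (p.2, [down0 w]) ∧
    LoopSeg ρ 0 ρ.len}

def ExHLoop (S : CPS Q A Γ) (w : Word A) : Set (Q × Q) :=
  {p | ∃ ρ : Run S, ρ.cfg 0 = (p.1, [down0 w]) ∧ ρ.cfg ρ.len = (p.2, [down0 w]) ∧
    HighLoopSeg ρ 0 ρ.len}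

def ExLLoop (S : CPS Q A Γ) (w : Word A) : Set (Q × Q) :=
  {p | ∃ ρ : Run S, ρ.cfg 0 = (p.1, [down0 w]) ∧ ρ.cfg ρ.len = (p.2, [down0 w]) ∧
    LowLoopSeg ρ 0 ρ.len}

def ExOneLoop (S : CPS Q A Γ) (w : Word A) : Set (Q × Q) :=
  {p | ∃ (ρ : Run S) (s' : Stack2 A), ρ.cfg 0 = (p.1, [down0 w]) ∧
    ρ.cfg ρ.len = (p.2, s' ++ [down0 w]) ∧ OneLoopSeg ρ 0 ρ.len}

/-! ## Finite binary trees -/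

/-- Finite binary trees with labels in `α` and optional left/right children. -/
inductive PTree (α : Type) where
  | node (a : α) (l r : Option (PTree α)) : PTree α

/-- The label of the node at address `d` (`false` = left/0, `true` = right/1). -/
def PTree.labelAt {α : Type} : PTree α → List Bool → Option α
  | .node a _ _, [] => some a
  | .node _ (some t) _, false :: d => t.labelAt d
  | .node _ none _, false :: _ => none
  | .node _ _ (some t), true :: d => t.labelAt d
  | .node _ _ none, true :: _ => none

def PTree.map {α β : Type} (f : α → β) : PTree α → PTree β
  | .node a l r =>
    .node (f a)
      (match l with | none => none | some t => some (t.map f))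
      (match r with | none => none | some t => some (t.map f))

/-- Convolution of two trees, with `none` as padding symbol `□`. -/
def PTree.conv {α β : Type} : PTree α → PTree β → PTree (Option α × Option β)
  | .node a l r, .node b l' r' =>
    .node (some a, some b)
      (match l, l' with
        | none, none => none
        | some t, none => some (t.map fun x => (some x, none))
        | none, some u => some (u.map fun x => (none, some x))
        | some t, some u => some (PTree.conv t u))
      (match r, r' with
        | none, none => none
        | some t, none => some (t.map fun x => (some x, none))
        | none, some u => some (u.map fun x => (none, some x))
        | some t, some u => some (PTree.conv t u))

/-- A (bottom-up nondeterministic) finite tree automaton. -/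
structure TreeAut (α : Type) where
  St : Type
  fin : Finite St
  qI : St
  F : Set St
  Δ : Set (St × α × St × St)

/-- Acceptance of a finite tree by a tree automaton. -/
def TreeAut.Accepts {α : Type} (M : TreeAut α) (t : PTree α) : Prop :=
  ∃ ρ : List Bool → M.St,
    (∀ d, t.labelAt d = none → ρ d = M.qI) ∧
    (∀ d a, t.labelAt d = some a → (ρ d, a, ρ (d ++ [false]), ρ (d ++ [true])) ∈ M.Δ) ∧
    ρ [] ∈ M.F

/-- A family of binary relations on `B` is tree-automatic. -/
def IsTreeAutomatic {B : Type} {I : Type} (E : I → B → B → Prop) : Prop :=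
  ∃ (α : Type) (_ : Finite α) (AB : TreeAut α) (AE : I → TreeAut (Option α × Option α))
    (f : {t : PTree α // AB.Accepts t} → B),
    Function.Bijective f ∧
      ∀ (i : I) (t₁ t₂ : {t : PTree α // AB.Accepts t}),
        (AE i).Accepts (PTree.conv t₁.1 t₂.1) ↔ E i (f t₁) (f t₂)

/-! ## The encoding of configurations as trees -/

/-- Labels of encoding trees: a state, a pair (symbol, link level), or `ε`. -/
abbrev EncLabel (Q A : Type) := Q ⊕ ((A × ℕ) ⊕ Unit)

def epsLab {Q A : Type} : EncLabel Q A := Sum.inr (Sum.inr ())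

def symLab {Q A : Type} (τ : Letter A) : EncLabel Q A := Sum.inr (Sum.inl (symOf τ, lvlOf τ))

/-- Encoding of blocklines as trees (with a fuel parameter driving the recursion;
the fuel used in `encStack` is large enough so that it never runs out on actual
blocklines). The left subtree encodes the blockline induced by the first maximal
block, the right subtree the remaining blocks. -/
def encBL (Q : Type) {A : Type} [DecidableEq A] :
    ℕ → EncLabel Q A → List (Word A) → PTree (EncLabel Q A)
  | 0, σ, _ => .node σ none none
  | _ + 1, σ, [] => .node σ none none
  | fuel + 1, σ, w :: rest =>
    if w.length ≤ 1 then
      match rest with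
      | [] => .node σ none none
      | _ :: _ => .node σ none (some (encBL Q fuel epsLab rest))
    else
      let p : Word A → Bool := fun v => decide (v.take 2 = w.take 2)
      let blk := (w :: rest).takeWhile p
      let restBlk := (w :: rest).dropWhile p
      .node σ
        (some (encBL Q fuel
          (match w[1]? with | some τ' => symLab τ' | none => epsLab)
          (blk.map List.tail)))
        (match restBlk with
          | [] => none
          | _ :: _ => some (encBL Q fuel epsLab restBlk))

/-- The total number of letters of a 2-word. -/
def size2 {A : Type} (s : Stack2 A) : ℕ := (s.map List.length).sum

/-- The encoding `Enc(s) = Enc(s, (⊥,1))` of a stack. -/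
def encStack (Q : Type) {A : Type} [DecidableEq A] (bot : A) (s : Stack2 A) :
    PTree (EncLabel Q A) :=
  encBL Q (size2 s + 1) (Sum.inr (Sum.inl (bot, 1))) s

/-- The encoding of a configuration: the state at the root, `Enc(s)` as left subtree. -/
def Enc {Q A : Type} [DecidableEq A] (bot : A) (c : Q × Stack2 A) : PTree (EncLabel Q A) :=
  .node (Sum.inl c.1) (some (encStack Q bot c.2)) none

/-- The class `EncTrees` of encoding trees. -/
def EncTrees (Q A : Type) (bot : A) : Set (PTree (EncLabel Q A)) :=
  {T | (∃ q : Q, T.labelAt [] = some (Sum.inl q)) ∧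
    T.labelAt [true] = none ∧ T.labelAt [false] ≠ none ∧
    T.labelAt [false] = some (Sum.inr (Sum.inl (bot, 1))) ∧
    (∀ (d : List Bool) (x : EncLabel Q A),
      T.labelAt (false :: (d ++ [false])) = some x →
        ∃ (σ : A) (l : ℕ), σ ≠ bot ∧ (l = 1 ∨ l = 2) ∧ x = Sum.inr (Sum.inl (σ, l))) ∧
    (∀ (d : List Bool) (x : EncLabel Q A), T.labelAt (d ++ [true]) = some x → x = epsLab) ∧
    (∀ (d : List Bool) (σ : A), ¬ (T.labelAt (d ++ [false]) = some (Sum.inr (Sum.inl (σ, 1))) ∧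
      T.labelAt (d ++ [true, false]) = some (Sum.inr (Sum.inl (σ, 1)))))}

/-- Restriction of a tree to the nodes lexicographically ≤ `d`. -/
def restrictLex {α : Type} : PTree α → List Bool → PTree α
  | .node a _ _, [] => .node a none none
  | .node a l _, false :: d =>
      .node a (match l with | none => none | some t => some (restrictLex t d)) none
  | .node a l r, true :: d =>
      .node a l (match r with | none => none | some t => some (restrictLex t d))

/-- The lexicographic order on tree addresses. -/
def lexLe (d e : List Bool) : Prop :=
  d <+: e ∨ ∃ (c x y : List Bool), d = c ++ false :: x ∧ e = c ++ true :: y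

/-! ## Deterministic finite automata with output (Moore machines) -/

structure Moore (α ω : Type) where
  St : Type
  fin : Finite St
  init : St
  step : St → α → St
  out : St → ω

def Moore.output {α ω : Type} (M : Moore α ω) (w : List α) : ω :=
  M.out (w.foldl M.step M.init)

/-!
Let `v`, `v'` be words such that every pair of states connected by a return from `v` is also
connected by a return from `v'`. A run that starts in `s : (v a)` and first reaches width `|s|` in
its last configuration never looks into `s`, and it never looks into `v` before `v` becomes the
topmost word; from that moment on it contains a return from `v` to the stack below, which can be
exchanged for one from `v'`. So the run is simulated from `t : (v' a)`, step by step with the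
level-2 links above `s` shifted by `|t| - |s|`.

This concerns all runs that first reach width `|s|` at their end, whereas a return also restricts
the last operation. The restriction is automatic if the starting word `u` has no level-2 link other
than `0`: a collapse to width `1` uses a link `1`, and as long as `Pop₁` of the initial stack is not
visited, such links only occur strictly above a copy of `u`.
-/

/-! ### Operations on stacks with a given topmost word -/

section Stacks

variable {B : Type}

/-- The operation `op` takes the stack `L ++ [x]`, with topmost word `x`, to the stack `t`. A
collapse along a level-1 link is the same case as `pop1`. -/
inductive TopStep (bot : B) (L : Stack2 B) (x : Word B) : Op B → Stack2 B → Prop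
  | clone2 : TopStep bot L x .clone2 (L ++ [x] ++ [x])
  | push1 {b : B} (hb : b ≠ bot) : TopStep bot L x (.push1 b) (L ++ [x ++ [Sum.inl b]])
  | push2 {b : B} (hb : b ≠ bot) :
      TopStep bot L x (.push2 b) (L ++ [x ++ [Sum.inr (b, L.length)]])
  | pop2 (hL : L ≠ []) : TopStep bot L x .pop2 L
  | pop1 {op : Op B} {y : Word B} {a : Letter B} (hx : x = y ++ [a]) (hy : y ≠ [])
      (hop : op = .pop1 ∨ op = .collapse ∧ lvlOf a = 1) : TopStep bot L x op (L ++ [y])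
  | collapse {y : Word B} {b : B} {k : ℕ} (hx : x = y ++ [Sum.inr (b, k)]) (hk : 0 < k) :
      TopStep bot L x .collapse ((L ++ [x]).take k)

lemma pop1_concat_eq_some_iff {L t : Stack2 B} {x : Word B} :
    pop1 (L ++ [x]) = some t ↔ ∃ y a, x = y ++ [a] ∧ y ≠ [] ∧ t = L ++ [y] := by
  rcases x.eq_nil_or_concat' with rfl | ⟨y, a, rfl⟩
  · simp [pop1]
  · simp [pop1, List.length_pos_iff, eq_comm]

lemma collapse_concat_eq_some_iff {L t : Stack2 B} {x : Word B} :
    collapse (L ++ [x]) = some t ↔ ∃ y a, x = y ++ [a] ∧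
      ((lvlOf a = 1 ∧ y ≠ [] ∧ t = L ++ [y]) ∨
        ∃ b k, a = Sum.inr (b, k) ∧ 0 < k ∧ t = (L ++ [x]).take k) := by
  rcases x.eq_nil_or_concat' with rfl | ⟨y, b | ⟨b, k⟩, rfl⟩
  · simp [collapse, top1]
  · simp [collapse, top1, lvlOf, pop1, List.length_pos_iff, eq_comm]
  · simp [collapse, top1, lvlOf, eq_comm]

lemma applyOp_concat_eq_some_iff [DecidableEq B] {bot : B} {op : Op B} {L t : Stack2 B}
    {x : Word B} : applyOp bot op (L ++ [x]) = some t ↔ TopStep bot L x op t := by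
  constructor
  · intro h
    cases op with
    | clone2 =>
      obtain rfl : L ++ [x] ++ [x] = t := by simpa [applyOp, clone2, top2] using h
      exact .clone2
    | push1 b =>
      obtain ⟨hb, rfl⟩ : b ≠ bot ∧ L ++ [x ++ [Sum.inl b]] = t := by
        simpa [applyOp, push1, top2] using h
      exact .push1 hb
    | push2 b =>
      obtain ⟨hb, rfl⟩ : b ≠ bot ∧ L ++ [x ++ [Sum.inr (b, L.length)]] = t := by
        simpa [applyOp, push2, top2] using h
      exact .push2 hb
    | pop2 =>
      obtain ⟨hL, rfl⟩ : L ≠ [] ∧ L = t := by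
        simpa [applyOp, CPG.pop2, List.length_pos_iff] using h
      exact .pop2 hL
    | pop1 =>
      obtain ⟨y, a, hx, hy, rfl⟩ := pop1_concat_eq_some_iff.1 h
      exact .pop1 hx hy (.inl rfl)
    | collapse =>
      obtain ⟨y, a, hx, ⟨ha, hy, rfl⟩ | ⟨b, k, rfl, hk, rfl⟩⟩ := collapse_concat_eq_some_iff.1 h
      · exact .pop1 hx hy (.inr ⟨rfl, ha⟩)
      · exact .collapse hx hk
  · intro h
    cases h with
    | clone2 => simp [applyOp, clone2, top2]
    | push1 hb => simp [applyOp, push1, top2, hb]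
    | push2 hb => simp [applyOp, push2, top2, hb]
    | pop2 hL => simp [applyOp, CPG.pop2, List.length_pos_iff, hL]
    | pop1 hx hy hop =>
      rcases hop with rfl | ⟨rfl, ha⟩
      · exact pop1_concat_eq_some_iff.2 ⟨_, _, hx, hy, rfl⟩
      · exact collapse_concat_eq_some_iff.2 ⟨_, _, hx, .inl ⟨ha, hy, rfl⟩⟩
    | collapse hx hk =>
      exact collapse_concat_eq_some_iff.2 ⟨_, _, hx, .inr ⟨_, _, rfl, hk, rfl⟩⟩

lemma symS_concat (L : Stack2 B) (x : Word B) : symS (L ++ [x]) = x.getLast?.map symOf := by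
  simp [symS, top1]

lemma iter_length_le {f : Stack2 B → Option (Stack2 B)}
    (hf : ∀ s t, f s = some t → t.length ≤ s.length) {n : ℕ} {s t : Stack2 B}
    (h : iter f n s = some t) : t.length ≤ s.length := by
  induction n generalizing s with
  | zero =>
    obtain rfl : s = t := by simpa [iter] using h
    exact le_rfl
  | succ n ih =>
    obtain ⟨u, hsu, hut⟩ := Option.bind_eq_some_iff.1 h
    exact (ih hut).trans (hf s u hsu)

lemma Substack.length_le {s t : Stack2 B} (h : Substack t s) : t.length ≤ s.length := by
  obtain ⟨n, m, h⟩ := h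
  obtain ⟨u, hsu, hut⟩ := Option.bind_eq_some_iff.1 h
  have pop1_le (s t : Stack2 B) (h : pop1 s = some t) : t.length ≤ s.length := by
    rcases s.eq_nil_or_concat' with rfl | ⟨L, x, rfl⟩
    · simp [pop1] at h
    · obtain ⟨y, a, -, -, rfl⟩ := pop1_concat_eq_some_iff.1 h
      simp
  have pop2_le (s t : Stack2 B) (h : pop2 s = some t) : t.length ≤ s.length := by
    obtain ⟨-, rfl⟩ : 1 < s.length ∧ s.dropLast = t := by simpa [pop2] using h
    simp
  exact (iter_length_le pop1_le hut).trans (iter_length_le pop2_le hsu)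

lemma Substack.refl (s : Stack2 B) : Substack s s := ⟨0, 0, rfl⟩

end Stacks

/-! ### Runs that descend to a given width -/

/-- There is a run of length `n` from `c` to `c'` whose last configuration is the first one of
width at most `k`. -/
inductive Descent (S : CPS Q A Γ) (k : ℕ) : ℕ → Q × Stack2 A → Q × Stack2 A → Prop
  | refl {c : Q × Stack2 A} (h : c.2.length ≤ k) : Descent S k 0 c c
  | step {n : ℕ} {γ : Γ} {c c' c'' : Q × Stack2 A} (h : k < c.2.length) (hstep : Trans S γ c c')
      (hrest : Descent S k n c' c'') : Descent S k (n + 1) c c''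

section Descents

variable {S : CPS Q A Γ} {k l m n : ℕ} {c c' c'' : Q × Stack2 A}

lemma Descent.eq_of_length_le (h : Descent S k n c c') (hc : c.2.length ≤ k) : c = c' := by
  cases h with
  | refl => rfl
  | step h => omega

lemma Descent.trans (hkl : k ≤ l) (h : Descent S l m c c') (h' : Descent S k n c' c'') :
    Descent S k (m + n) c c'' := by
  induction h with
  | refl => simpa using h'
  | step h hstep _ ih =>
    rw [Nat.add_right_comm]
    exact .step (hkl.trans_lt h) hstep (ih h')

lemma Descent.split (hkl : k ≤ l) (h : Descent S k n c c'') :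
    ∃ c' n₁ n₂, n₁ + n₂ = n ∧ Descent S l n₁ c c' ∧ Descent S k n₂ c' c'' := by
  induction h with
  | @refl c h => exact ⟨c, 0, 0, rfl, .refl (h.trans hkl), .refl h⟩
  | @step n γ c c₁ c'' h hstep hrest ih =>
    by_cases hl : c.2.length ≤ l
    · exact ⟨c, 0, n + 1, by omega, .refl hl, .step h hstep hrest⟩
    · obtain ⟨c', n₁, n₂, hn, h₁, h₂⟩ := ih
      exact ⟨c', n₁ + 1, n₂, by omega, .step (by omega) hstep h₁, h₂⟩

lemma Run.descent (ρ : Run S) (hlt : ∀ i < ρ.len, k < (ρ.stk i).length)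
    (hle : (ρ.stk ρ.len).length ≤ k) : Descent S k ρ.len (ρ.cfg 0) (ρ.cfg ρ.len) := by
  have from_index (d i : ℕ) (hi : i + d = ρ.len) : Descent S k d (ρ.cfg i) (ρ.cfg ρ.len) := by
    induction d generalizing i with
    | zero =>
      obtain rfl : i = ρ.len := hi
      exact .refl hle
    | succ d ih => exact .step (hlt i (by omega)) ⟨_, ρ.ok i (by omega)⟩ (ih (i + 1) (by omega))
  exact from_index ρ.len 0 (zero_add _)

lemma Descent.exists_run [Nonempty Γ] (h : Descent S k n c c') :
    ∃ ρ : Run S, ρ.cfg 0 = c ∧ ρ.cfg ρ.len = c' ∧ ∀ i < ρ.len, k < (ρ.stk i).length := by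
  induction h with
  | @refl c =>
    obtain ⟨γ⟩ := ‹Nonempty Γ›
    exact ⟨⟨0, fun _ => c, fun _ => γ, fun _ => .pop2, by simp⟩, rfl, rfl, by simp⟩
  | @step n γ c c₁ c' h hstep hrest ih =>
    obtain ⟨ρ, rfl, rfl, hlt⟩ := ih
    obtain ⟨op, hop⟩ := hstep
    refine ⟨⟨ρ.len + 1, fun i => i.casesOn c ρ.cfg, fun i => i.casesOn γ ρ.lab,
      fun i => i.casesOn op ρ.op, ?_⟩, rfl, rfl, ?_⟩
    · rintro (_ | i) hi
      · exact hop
      · exact ρ.ok i (by omega)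
    · rintro (_ | i) hi
      · exact h
      · exact hlt i (Nat.lt_of_succ_lt_succ hi)

end Descents

/-! ### Stacks that agree up to a shift of the level-2 links -/

/-- No level-2 link of the word points to a substack. -/
def ZeroLinks {B : Type} (w : Word B) : Prop := ∀ b k, Sum.inr (b, k) ∈ w → k = 0

/-- The letters agree, except that a link to `i` words above width `k` becomes a link to `i` words
above width `l`. -/
inductive LinkShift {B : Type} (k l : ℕ) : Letter B → Letter B → Prop
  | level1 (b : B) : LinkShift k l (Sum.inl b) (Sum.inl b)
  | zero (b : B) : LinkShift k l (Sum.inr (b, 0)) (Sum.inr (b, 0))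
  | shift (b : B) (i : ℕ) : LinkShift k l (Sum.inr (b, k + i)) (Sum.inr (b, l + i))

/-- The two words properly extend `v` and `v'`, respectively, by words that agree up to `LinkShift`.
-/
inductive ShiftedExt {B : Type} (k l : ℕ) (v v' : Word B) : Word B → Word B → Prop
  | concat {p p' : Word B} {a a' : Letter B} (hp : List.Forall₂ (LinkShift k l) p p')
      (ha : LinkShift k l a a') : ShiftedExt k l v v' (v ++ p ++ [a]) (v' ++ p' ++ [a'])

section Shifts

variable {B : Type} {k l : ℕ} {v v' x x' : Word B} {a a' : Letter B}

lemma forall₂_concat_left_iff {α β : Type*} {R : α → β → Prop} {X : List α} {x : α}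
    {Y : List β} :
    List.Forall₂ R (X ++ [x]) Y ↔ ∃ Z y, List.Forall₂ R X Z ∧ R x y ∧ Y = Z ++ [y] := by
  constructor
  · intro h
    obtain ⟨y, Z, hy, hZ, hYZ⟩ :
        ∃ y Z, R x y ∧ List.Forall₂ R X.reverse Z ∧ Y.reverse = y :: Z := by
      simpa [List.forall₂_cons_left_iff] using List.forall₂_reverse_iff.2 h
    refine ⟨Z.reverse, y, List.forall₂_reverse_iff.1 (by simpa using hZ), hy, ?_⟩
    simpa using congrArg List.reverse hYZ
  · rintro ⟨Z, y, hZ, hy, rfl⟩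
    exact List.rel_append hZ (.cons hy .nil)

lemma forall₂_concat {α β : Type*} {R : α → β → Prop} {X : List α} {Y : List β} {x : α} {y : β}
    (h : List.Forall₂ R X Y) (hxy : R x y) : List.Forall₂ R (X ++ [x]) (Y ++ [y]) :=
  forall₂_concat_left_iff.2 ⟨Y, y, h, hxy, rfl⟩

lemma LinkShift.symOf_eq (h : LinkShift k l a a') : symOf a = symOf a' := by
  cases h <;> rfl

lemma LinkShift.lvlOf_eq (h : LinkShift k l a a') : lvlOf a = lvlOf a' := by
  cases h <;> rfl

lemma ZeroLinks.forall₂_linkShift (h : ZeroLinks x) : List.Forall₂ (LinkShift k l) x x := by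
  refine List.forall₂_same.2 fun a ha => ?_
  rcases a with b | ⟨b, i⟩
  · exact .level1 b
  · obtain rfl := h b i ha
    exact .zero b

lemma ShiftedExt.append_singleton (h : ShiftedExt k l v v' x x') (ha : LinkShift k l a a') :
    ShiftedExt k l v v' (x ++ [a]) (x' ++ [a']) := by
  obtain ⟨hp, hb⟩ := h
  simpa only [List.append_assoc] using
    ShiftedExt.concat (v := v) (v' := v') (forall₂_concat hp hb) ha

lemma ShiftedExt.map_symOf_getLast? (h : ShiftedExt k l v v' x x') :
    x.getLast?.map symOf = x'.getLast?.map symOf := by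
  obtain ⟨-, ha⟩ := h
  simp [ha.symOf_eq]

lemma ShiftedExt.of_dropLast {y : Word B} (h : ShiftedExt k l v v' (y ++ [a]) x') :
    ∃ y' a', x' = y' ++ [a'] ∧ LinkShift k l a a' ∧
      (y = v ∧ y' = v' ∨ ShiftedExt k l v v' y y') := by
  generalize hx : y ++ [a] = x at h
  obtain @⟨p, p', b, b', hp, hb⟩ := h
  obtain ⟨rfl, ⟨⟩⟩ := List.append_inj' hx rfl
  refine ⟨_, _, rfl, hb, ?_⟩
  rcases p.eq_nil_or_concat' with rfl | ⟨p, c, rfl⟩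
  · obtain rfl := List.forall₂_nil_left_iff.1 hp
    simp
  · obtain ⟨p', c', hpp', hc, rfl⟩ := forall₂_concat_left_iff.1 hp
    right
    simpa only [List.append_assoc] using ShiftedExt.concat (v := v) (v' := v') hpp' hc

lemma TopStep.simulate {bot : B} {op : Op B} {s t s' X Y : Stack2 B} (ht : t ≠ [])
    (hXY : List.Forall₂ (ShiftedExt s.length t.length v v') X Y)
    (hx : ShiftedExt s.length t.length v v' x x') (h : TopStep bot (s ++ X) x op s') :
    (∃ X' Y', s' = s ++ X' ∧ TopStep bot (t ++ Y) x' op (t ++ Y') ∧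
        List.Forall₂ (ShiftedExt s.length t.length v v') X' Y') ∨
      (s' = s ++ X ++ [v] ∧ (v' ≠ [] → TopStep bot (t ++ Y) x' op (t ++ Y ++ [v']))) := by
  cases h with
  | clone2 =>
    refine .inl ⟨X ++ [x] ++ [x], Y ++ [x'] ++ [x'], by simp, ?_,
      forall₂_concat (forall₂_concat hXY hx) hx⟩
    simpa only [List.append_assoc] using TopStep.clone2 (L := t ++ Y)
  | @push1 b hb =>
    refine .inl ⟨X ++ [x ++ [Sum.inl b]], Y ++ [x' ++ [Sum.inl b]], by simp, ?_,
      forall₂_concat hXY (hx.append_singleton (.level1 b))⟩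
    simpa only [List.append_assoc] using TopStep.push1 (L := t ++ Y) hb
  | @push2 b hb =>
    refine .inl ⟨X ++ [x ++ [Sum.inr (b, s.length + X.length)]],
      Y ++ [x' ++ [Sum.inr (b, t.length + X.length)]], by simp, ?_,
      forall₂_concat hXY (hx.append_singleton (.shift b _))⟩
    simpa only [List.append_assoc, List.length_append, hXY.length_eq] using
      TopStep.push2 (L := t ++ Y) (x := x') hb
  | pop2 => exact .inl ⟨X, Y, rfl, .pop2 (by simp [ht]), hXY⟩
  | @pop1 _ y a hxy hy hop =>
    subst hxy
    obtain ⟨y', a', rfl, ha, ⟨rfl, rfl⟩ | hyy'⟩ := hx.of_dropLast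
    · exact .inr ⟨rfl, fun hv' => .pop1 rfl hv' (ha.lvlOf_eq ▸ hop)⟩
    · refine .inl ⟨X ++ [y], Y ++ [y'], by simp, ?_, forall₂_concat hXY hyy'⟩
      have hy' : y' ≠ [] := by cases hyy'; simp
      simpa only [List.append_assoc] using
        TopStep.pop1 (L := t ++ Y) rfl hy' (ha.lvlOf_eq ▸ hop)
  | @collapse y b j hxy hj =>
    subst hxy
    obtain ⟨y', a', rfl, ha, -⟩ := hx.of_dropLast
    cases ha with
    | zero => omega
    | shift _ i =>
      refine .inl ⟨(X ++ [y ++ [Sum.inr (b, s.length + i)]]).take i,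
        (Y ++ [y' ++ [Sum.inr (b, t.length + i)]]).take i, ?_, ?_,
        List.forall₂_take i (forall₂_concat hXY hx)⟩
      · rw [List.append_assoc, List.take_length_add_append]
      · have ht_pos : 0 < t.length := List.length_pos_iff.2 ht
        rw [← List.take_length_add_append (l₁ := t), ← List.append_assoc]
        exact .collapse rfl (by omega)

end Shifts

/-! ### Exchanging returns -/

/-- The pairs `(q, q')` such that a run leads from `(q, w : w)` to `(q', [w])` and only its last
configuration has width `1`. -/
def returnPairs (S : CPS Q A Γ) (w : Word A) : Set (Q × Q) :=
  {p | ∃ n, Descent S 1 n (p.1, [w, w]) (p.2, [w])}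

/-- Descents from the topmost word `v` to the stack `s` below can be exchanged for descents from the
topmost word `v'` to any other stack `t`. That the former end in `s`, and not just at its width, is
part of the condition. -/
def RetTransfer (S : CPS Q A Γ) (v v' : Word A) : Prop :=
  ∀ ⦃q : Q⦄ ⦃c : Q × Stack2 A⦄ ⦃n : ℕ⦄ ⦃s t : Stack2 A⦄, s ≠ [] → t ≠ [] →
    Descent S s.length n (q, s ++ [v]) c →
      ∃ q' m, c = (q', s) ∧ Descent S t.length m (q, t ++ [v']) (q', t)

section Transfer

variable {S : CPS Q A Γ} {v v' p : Word A}

lemma not_descent_concat_nil {q : Q} {c : Q × Stack2 A} {n : ℕ} {s : Stack2 A} :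
    ¬ Descent S s.length n (q, s ++ [[]]) c := by
  intro h
  cases h with
  | refl h => simp at h
  | step _ hstep =>
    obtain ⟨op, σ, hσ, -⟩ := hstep
    simp [symS_concat] at hσ

lemma retTransfer_nil (S : CPS Q A Γ) (v' : Word A) : RetTransfer S [] v' :=
  fun _ _ _ _ _ _ _ h => (not_descent_concat_nil h).elim

lemma RetTransfer.descent (H : RetTransfer S v v') {s t : Stack2 A} (hs : s ≠ []) (ht : t ≠ [])
    {n : ℕ} {X Y : Stack2 A} (hXY : List.Forall₂ (ShiftedExt s.length t.length v v') X Y)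
    {q : Q} {c : Q × Stack2 A} (h : Descent S s.length n (q, s ++ X) c) :
    ∃ q' m, c = (q', s) ∧ Descent S t.length m (q, t ++ Y) (q', t) := by
  induction n using Nat.strong_induction_on generalizing X Y q c with
  | _ n ih =>
  rcases X.eq_nil_or_concat' with rfl | ⟨X, x, rfl⟩
  · obtain rfl := List.forall₂_nil_left_iff.1 hXY
    rw [List.append_nil] at h ⊢
    exact ⟨q, 0, (h.eq_of_length_le le_rfl).symm, .refl le_rfl⟩
  obtain ⟨Y, y, hXY', hxy, rfl⟩ := forall₂_concat_left_iff.1 hXY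
  rw [← List.append_assoc] at h ⊢
  cases h with
  | refl h => simp at h
  | @step n γ _ c₁ _ _ hstep hrest =>
  obtain ⟨q₁, s₁⟩ := c₁
  obtain ⟨op, σ, hσ, hΔ, hop⟩ := hstep
  have hop : applyOp S.bot op (s ++ X ++ [x]) = some s₁ := hop
  have hσ' : symS (t ++ Y ++ [y]) = some σ := by
    rwa [symS_concat, ← hxy.map_symOf_getLast?, ← symS_concat (s ++ X)]
  have first_step {t₁ : Stack2 A} (ht₁ : TopStep S.bot (t ++ Y) y op t₁) {q' : Q} {m : ℕ}
      (hm : Descent S t.length m (q₁, t₁) (q', t)) :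
      Descent S t.length (m + 1) (q, t ++ Y ++ [y]) (q', t) :=
    .step (c' := (q₁, t₁)) (by simp)
      ⟨op, σ, hσ', hΔ, applyOp_concat_eq_some_iff.2 ht₁⟩ hm
  rcases (applyOp_concat_eq_some_iff.1 hop).simulate ht hXY' hxy with
    ⟨X₁, Y₁, rfl, ht₁, hXY₁⟩ | ⟨rfl, ht₁⟩
  · obtain ⟨q', m, rfl, hm⟩ := ih n (by omega) hXY₁ hrest
    exact ⟨q', m + 1, rfl, first_step ht₁ hm⟩
  · obtain ⟨c₂, n₁, n₂, hn, hret, hrest⟩ := hrest.split (l := (s ++ X).length) (by simp)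
    obtain ⟨q₂, m₁, rfl, hret'⟩ := H (s := s ++ X) (t := t ++ Y) (by simp [hs]) (by simp [ht]) hret
    have hv' : v' ≠ [] := by
      rintro rfl
      exact not_descent_concat_nil hret'
    obtain ⟨q', m₂, rfl, hm₂⟩ := ih n₂ (by omega) hXY' hrest
    exact ⟨q', m₁ + m₂ + 1, rfl, first_step (ht₁ hv') (hret'.trans (by simp) hm₂)⟩

lemma RetTransfer.append (H : RetTransfer S v v') (hp : ZeroLinks p) :
    RetTransfer S (v ++ p) (v' ++ p) := by
  rcases p.eq_nil_or_concat' with rfl | ⟨p, a, rfl⟩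
  · simpa using H
  intro q c n s t hs ht h
  have hpp : List.Forall₂ (LinkShift s.length t.length) (p ++ [a]) (p ++ [a]) :=
    hp.forall₂_linkShift
  obtain ⟨p', a', hpp', ha, hpa⟩ := forall₂_concat_left_iff.1 hpp
  obtain ⟨rfl, ⟨⟩⟩ := List.append_inj' hpa rfl
  refine H.descent hs ht (.cons ?_ .nil) h
  simpa only [List.append_assoc] using ShiftedExt.concat (v := v) (v' := v') hpp' ha

lemma ZeroLinks.retTransfer (hv : ZeroLinks v) : RetTransfer S v v := by
  simpa using (retTransfer_nil S []).append hv

lemma retTransfer_iff_returnPairs_subset (hv : ZeroLinks v) (hv' : ZeroLinks v') :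
    RetTransfer S v v' ↔ returnPairs S v ⊆ returnPairs S v' := by
  constructor
  · rintro H ⟨q, q'⟩ ⟨n, hn⟩
    obtain ⟨_, m, ⟨⟩, hm⟩ := H (s := [v]) (t := [v']) (by simp) (by simp) hn
    exact ⟨m, hm⟩
  · intro hsub q c n s t hs ht h
    obtain ⟨q', _, rfl, hv_desc⟩ := hv.retTransfer (t := [v]) hs (by simp) h
    obtain ⟨_, hv'_desc⟩ := hsub (show (q, q') ∈ returnPairs S v from ⟨_, hv_desc⟩)
    obtain ⟨_, m, ⟨⟩, hm⟩ := hv'.retTransfer (s := [v']) (by simp) ht hv'_desc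
    exact ⟨q', m, rfl, hm⟩

lemma returnPairs_append_subset (hv : ZeroLinks v) (hv' : ZeroLinks v') (hp : ZeroLinks p)
    (h : returnPairs S v ⊆ returnPairs S v') :
    returnPairs S (v ++ p) ⊆ returnPairs S (v' ++ p) := by
  have append_zeroLinks {w : Word A} (hw : ZeroLinks w) : ZeroLinks (w ++ p) :=
    fun b k hb => (List.mem_append.1 hb).elim (hw b k) (hp b k)
  rw [← retTransfer_iff_returnPairs_subset (append_zeroLinks hv) (append_zeroLinks hv')]
  exact ((retTransfer_iff_returnPairs_subset hv hv').2 h).append hp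

end Transfer

/-! ### The last operation of a return -/

/-- The bottommost word of the stack is `w`, and `u` is a prefix of the second word and of every
word, apart from `w`, that contains a level-2 link to the substack of width `1`. -/
inductive Guarded {B : Type} (w u : Word B) : Stack2 B → Prop
  | base : Guarded w u [w]
  | concat {L : Stack2 B} {x : Word B} (hL : Guarded w u L)
      (hx : (L.length = 1 ∨ ∃ b, Sum.inr (b, 1) ∈ x) → u <+: x) : Guarded w u (L ++ [x])

section GuardedStacks

variable {B : Type} {bot : B} {w u x : Word B} {L t : Stack2 B} {op : Op B}

lemma Guarded.ne_nil (h : Guarded w u t) : t ≠ [] := by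
  cases h <;> simp

lemma Guarded.exists_eq_concat (h : Guarded w u t) (ht : t ≠ [w]) :
    ∃ L x, t = L ++ [x] ∧ Guarded w u L ∧ ((L.length = 1 ∨ ∃ b, Sum.inr (b, 1) ∈ x) → u <+: x) := by
  cases h with
  | base => exact absurd rfl ht
  | concat hL hx => exact ⟨_, _, rfl, hL, hx⟩

lemma Guarded.eq_singleton (h : Guarded w u t) (ht : t.length = 1) : t = [w] := by
  by_contra htw
  obtain ⟨L, x, rfl, hL, -⟩ := h.exists_eq_concat htw
  exact hL.ne_nil (by simpa using ht)

lemma Guarded.take (h : Guarded w u t) {k : ℕ} (hk : 0 < k) : Guarded w u (t.take k) := by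
  induction h with
  | base => simpa [List.take_of_length_le (show [w].length ≤ k from hk)] using Guarded.base
  | @concat L x hL hx ih =>
    by_cases hkL : k ≤ L.length
    · rwa [List.take_append_of_le_length hkL]
    · rw [List.take_of_length_le (by simp; omega)]
      exact hL.concat hx

lemma TopStep.guarded (hu : ZeroLinks u) (hL : Guarded w u L)
    (hx : (L.length = 1 ∨ ∃ b, Sum.inr (b, 1) ∈ x) → u <+: x) (h : TopStep bot L x op t)
    (ht : CPG.pop1 [w, u] ≠ some t) : Guarded w u t := by
  cases h with
  | clone2 =>
    refine (hL.concat hx).concat fun hc => hx (hc.imp_left fun h => ?_)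
    exact absurd (by simpa using h) hL.ne_nil
  | push1 =>
    refine hL.concat fun hc => (hx (hc.imp_right ?_)).trans (List.prefix_append x _)
    simp
  | push2 =>
    refine hL.concat fun hc => (hx ?_).trans (List.prefix_append x _)
    simpa [exists_or, or_assoc, or_comm, eq_comm] using hc
  | pop2 => exact hL
  | @pop1 _ y a hxy hy hop =>
    subst hxy
    refine hL.concat fun hc => ?_
    have hpre : u <+: y ++ [a] := hx (hc.imp_right fun ⟨b, hb⟩ => ⟨b, List.mem_append_left _ hb⟩)
    refine (List.prefix_concat_iff.1 hpre).resolve_left ?_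
    rintro rfl
    rcases hc with hc | ⟨b, hb⟩
    · obtain rfl := hL.eq_singleton hc
      exact ht (pop1_concat_eq_some_iff (L := [w]).2 ⟨y, a, rfl, hy, rfl⟩)
    · exact one_ne_zero (hu b 1 (List.mem_append_left _ hb))
  | collapse _ hk => exact (hL.concat hx).take hk

lemma TopStep.eq_pop2_or_collapse (hu : ZeroLinks u) (hL : L ≠ [])
    (hx : (∃ b, Sum.inr (b, 1) ∈ x) → u <+: x) (h : TopStep bot L x op t) (ht : t.length = 1) :
    op = .pop2 ∨ op = .collapse ∧ u <+: x ∧ u ≠ x := by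
  have hL_pos : 0 < L.length := List.length_pos_iff.2 hL
  cases h with
  | pop2 => exact .inl rfl
  | @collapse y b k hxy hk =>
    obtain rfl : k = 1 := by
      rw [List.length_take, List.length_append, List.length_singleton] at ht
      omega
    have hb : Sum.inr (b, 1) ∈ x := by simp [hxy]
    refine .inr ⟨rfl, hx ⟨b, hb⟩, ?_⟩
    rintro rfl
    exact one_ne_zero (hu b 1 hb)
  | _ => simp [hL] at ht

end GuardedStacks

section Returns

variable {S : CPS Q A Γ} {ρ : Run S} {w u : Word A}

lemma Run.guarded (hu : ZeroLinks u) {i : ℕ} (hi : Guarded w u (ρ.stk i))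
    (hw : ∀ k, i ≤ k → k < ρ.len → ρ.stk k ≠ [w])
    (hpop : ∀ k, i < k → k ≤ ρ.len → pop1 [w, u] ≠ some (ρ.stk k)) {k : ℕ} (hik : i ≤ k)
    (hk : k ≤ ρ.len) : Guarded w u (ρ.stk k) := by
  induction k, hik using Nat.le_induction with
  | base => exact hi
  | succ k hik ih =>
    obtain ⟨L, x, hstk, hL, hx⟩ := (ih (by omega)).exists_eq_concat (hw k hik hk)
    obtain ⟨-, -, -, hop⟩ := ρ.ok k hk
    change applyOp _ _ (ρ.stk k) = some (ρ.stk (k + 1)) at hop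
    rw [hstk, applyOp_concat_eq_some_iff] at hop
    exact hop.guarded hu hL hx (hpop _ (by omega) hk)

lemma RetSeg.of_last_op {i : ℕ} (hshell : RetShell ρ i ρ.len) (hi : top2 (ρ.stk i) = some u)
    (hu : ZeroLinks u) (hlast : Guarded w u (ρ.stk (ρ.len - 1)))
    (hlast_ne : ρ.stk (ρ.len - 1) ≠ [w]) (hend : ρ.stk ρ.len = [w]) : RetSeg ρ i ρ.len := by
  obtain ⟨L, x, hstk, hL, hx⟩ := hlast.exists_eq_concat hlast_ne
  have hlen : ρ.len - 1 < ρ.len := by have := hshell.1; omega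
  obtain ⟨-, -, -, hop⟩ := ρ.ok _ hlen
  rw [Nat.sub_add_cancel (by omega)] at hop
  change applyOp _ _ (ρ.stk (ρ.len - 1)) = some (ρ.stk ρ.len) at hop
  rw [hstk, hend, applyOp_concat_eq_some_iff] at hop
  rcases hop.eq_pop2_or_collapse hu hL.ne_nil (fun h => hx (.inr h)) rfl with hop | ⟨hop, hux, hne⟩
  · exact .pop2 hshell hop
  · exact .collapse hshell hop ⟨u, x, hi, by simp [hstk, top2], hux, hne⟩

lemma RetShell.of_width (hwidth : ∀ k < ρ.len, 1 < (ρ.stk k).length) (hend : ρ.stk ρ.len = [w])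
    {i : ℕ} (hi : i < ρ.len) (hstk : ρ.stk i = [w, u]) : RetShell ρ i ρ.len := by
  refine ⟨hi, le_rfl, by simp [hstk, hend, pop2], fun k _ hk hsub => ?_⟩
  have hle := hsub.length_le
  rw [hend, List.length_singleton] at hle
  exact (hwidth k hk).not_ge hle

lemma RetSeg.of_width (hwidth : ∀ k < ρ.len, 1 < (ρ.stk k).length) (hend : ρ.stk ρ.len = [w])
    (hu : ZeroLinks u) {i : ℕ} (hi : i < ρ.len) (hstk : ρ.stk i = [w, u]) :
    RetSeg ρ i ρ.len := by
  induction hn : u.length using Nat.strong_induction_on generalizing u i with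
  | _ n ih =>
  have hshell := RetShell.of_width hwidth hend hi hstk
  have ne_singleton {k : ℕ} (hk : k < ρ.len) : ρ.stk k ≠ [w] := by
    intro h
    simpa [h] using hwidth k hk
  by_cases hpop : ∃ k, i < k ∧ k ≤ ρ.len ∧ pop1 [w, u] = some (ρ.stk k)
  · obtain ⟨k, hik, hk, hpop⟩ := hpop
    obtain ⟨y, a, rfl, -, hstk_k⟩ := pop1_concat_eq_some_iff (L := [w]).1 hpop
    have hk_ne : k ≠ ρ.len := by
      rintro rfl
      simp [hend] at hstk_k
    have hy : ZeroLinks y := fun b j hb => hu b j (List.mem_append_left _ hb)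
    have hy_lt : y.length < n := by simp [← hn]
    exact .sub hshell hik hk (hstk ▸ hpop) (ih _ hy_lt hy (by omega) hstk_k rfl)
  · push Not at hpop
    have hguard : Guarded w u (ρ.stk i) := by
      rw [hstk]
      exact Guarded.base.concat fun _ => List.prefix_rfl
    exact .of_last_op hshell (by simp [hstk, top2]) hu
      (ρ.guarded hu hguard (fun _ _ => ne_singleton) hpop (by omega) (by omega))
      (ne_singleton (by omega)) hend

lemma RetSeg.retShell {i j : ℕ} (h : RetSeg ρ i j) : RetShell ρ i j := by
  cases h <;> assumption

lemma Run.one_lt_width (hstart : ρ.stk 0 = [w, u]) (hw : ∀ k < ρ.len, ρ.stk k ≠ [w]) :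
    ∀ k < ρ.len, 1 < (ρ.stk k).length := by
  intro k hk
  have hguard : Guarded w [] (ρ.stk 0) := by
    rw [hstart]
    exact Guarded.base.concat fun _ => List.nil_prefix
  have hk_guard : Guarded w [] (ρ.stk k) :=
    ρ.guarded (by simp [ZeroLinks]) hguard (fun k _ => hw k) (by simp [pop1]) k.zero_le hk.le
  have hne_one : (ρ.stk k).length ≠ 1 := fun h => hw k hk (hk_guard.eq_singleton h)
  have hpos : 0 < (ρ.stk k).length := List.length_pos_iff.2 hk_guard.ne_nil
  omega

end Returns

/-! ### The dependence of `ExRet` on the last letter -/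

section ExRets

variable {S : CPS Q A Γ} {v v' w w' : Word A} {a a' : Letter A}

lemma zeroLinks_down0 {B : Type} (w : Word B) : ZeroLinks (down0 w) := by
  intro b k hb
  obtain ⟨c | ⟨c, j⟩, -, hc⟩ := List.mem_map.1 hb
  · cases hc
  · cases hc
    rfl

lemma down0_singleton_congr {B : Type} {a a' : Letter B} (hsym : symOf a = symOf a')
    (hlvl : lvlOf a = lvlOf a') : down0 [a] = down0 [a'] := by
  rcases a with b | ⟨b, i⟩ <;> rcases a' with b' | ⟨b', i'⟩ <;>
    simp_all [symOf, lvlOf, down0]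

lemma exRet_eq_returnPairs (S : CPS Q A Γ) (w : Word A) :
    ExRet S w = returnPairs S (down0 w) := by
  ext ⟨q, q'⟩
  constructor
  · rintro ⟨ρ, hstart, hend, hret⟩
    have hstart_stk : ρ.stk 0 = [down0 w, down0 w] := congrArg Prod.snd hstart
    have hend_stk : ρ.stk ρ.len = [down0 w] := congrArg Prod.snd hend
    have not_end (k : ℕ) (hk : k < ρ.len) : ρ.stk k ≠ [down0 w] := by
      intro h
      refine hret.retShell.2.2.2 k k.zero_le hk ?_
      rw [h, hend_stk]
      exact .refl _
    have h := ρ.descent (Run.one_lt_width hstart_stk not_end) (by simp [hend_stk])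
    rw [hstart, hend] at h
    exact ⟨ρ.len, h⟩
  · rintro ⟨n, h⟩
    have : Nonempty Γ := by
      cases h with
      | @step _ γ => exact ⟨γ⟩
    obtain ⟨ρ, hstart, hend, hwidth⟩ := h.exists_run
    have hstart_stk : ρ.stk 0 = [down0 w, down0 w] := congrArg Prod.snd hstart
    have hend_stk : ρ.stk ρ.len = [down0 w] := congrArg Prod.snd hend
    have hlen : 0 < ρ.len := by
      by_contra! hlen
      simp [Nat.le_zero.1 hlen, hstart_stk] at hend_stk
    exact ⟨ρ, hstart, hend, .of_width hwidth hend_stk (zeroLinks_down0 w) hlen hstart_stk⟩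

lemma exRet_concat_subset (hsym : symOf a = symOf a') (hlvl : lvlOf a = lvlOf a')
    (h : ExRet S v ⊆ ExRet S v') : ExRet S (v ++ [a]) ⊆ ExRet S (v' ++ [a']) := by
  have down0_concat (u : Word A) (b : Letter A) : down0 (u ++ [b]) = down0 u ++ down0 [b] :=
    List.map_append
  simp only [exRet_eq_returnPairs, down0_concat, ← down0_singleton_congr hsym hlvl] at h ⊢
  exact returnPairs_append_subset (zeroLinks_down0 _) (zeroLinks_down0 _) (zeroLinks_down0 _) h

theorem exRet_determined_general (S : CPS Q A Γ) {w w' : Word A}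
    (hsl : ∃ a a', w.getLast? = some a ∧ w'.getLast? = some a' ∧
      symOf a = symOf a' ∧ lvlOf a = lvlOf a')
    (hret : ExRet S w.dropLast = ExRet S w'.dropLast) :
    ExRet S w = ExRet S w' := by
  obtain ⟨a, a', ha, ha', hsym, hlvl⟩ := hsl
  rw [← List.dropLast_append_getLast? a ha, ← List.dropLast_append_getLast? a' ha']
  exact (exRet_concat_subset hsym hlvl hret.subset).antisymm
    (exRet_concat_subset hsym.symm hlvl.symm hret.symm.subset)

end ExRets

/-- `ExRet(s)` is determined by `ExRet(Pop₁(s))`, `Sym(s)` and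
`Lvl(s)` (with the convention `ExRet(ε) = ∅`). -/
theorem exRet_determined
    {Q A Γ : Type} [DecidableEq A] (S : CPS Q A Γ) (w w' : Word A)
    (hw : ∃ s, IsStack S.bot s ∧ top2 s = some w)
    (hw' : ∃ s, IsStack S.bot s ∧ top2 s = some w')
    (hsl : ∃ a a', w.getLast? = some a ∧ w'.getLast? = some a' ∧
      symOf a = symOf a' ∧ lvlOf a = lvlOf a')
    (hret : ExRet S w.dropLast = ExRet S w'.dropLast) :
    ExRet S w = ExRet S w' :=
  exRet_determined_general S hsl hret

end CPG
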